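/- arXiv:math/0702573 — 6 statements merged into one kernel-verified Lean document; each statement's English description precedes it below -/
import Mathlib

section
/- Fix n ≥ 1 and times 0 < T_1 < … < T_n, and suppose Assumption A holds and that k_{j-1}(T_j,T_j) > 0 for j = 1,…,n. Define recursively ρ̄_0 = ρ̄ and, for j = 1,…,n, ᾱ_j(t) = ρ̄_{j-1}(t,T_j)/k_{j-1}(T_j,T_j) and ρ̄_j(t,T) = ρ̄_{j-1}(t,T) − α_j(T) ρ̄_{j-1}(t,T_j). Then for each j = 1,…,n: (α_j(T_n+εt) − α_j(T_n))/γ_ε converges to ᾱ_j(t) uniformly in t ∈ [0,1] as ε → 0⁺, and for every T > 0, (k_j(T_n+εt,T) − k_j(T_n,T))/γ_ε converges to ρ̄_j(t,T) uniformly in t ∈ [0,1] as ε → 0⁺; moreover ρ̄_j(t,T) = ρ̄_{j-1}(t,T) − ᾱ_j(t) k_{j-1}(T,T_j). -/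
open MeasureTheory Filter Topology Set

noncomputable def condCov (k : ℝ → ℝ → ℝ) (T : ℕ → ℝ) : ℕ → ℝ → ℝ → ℝ
  | 0 => k
  | j + 1 => fun t s =>
      condCov k T j t s -
        condCov k T j t (T (j + 1)) / condCov k T j (T (j + 1)) (T (j + 1)) *
          condCov k T j s (T (j + 1))

noncomputable def condRec (k : ℝ → ℝ → ℝ) (T : ℕ → ℝ) (f : ℝ → ℝ → ℝ) : ℕ → ℝ → ℝ → ℝ
  | 0 => f
  | j + 1 => fun t S =>
      condRec k T f j t S -
        condCov k T j S (T (j + 1)) / condCov k T j (T (j + 1)) (T (j + 1)) *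
          condRec k T f j t (T (j + 1))

/-!
The coefficients in the recursion for `condRec k T f` depend on the second argument only. Hence
`f ↦ condRec k T f j t S` is a linear functional of `f t ·` involving finitely many values, and
`k` itself is sent to `condCov k T j`. The conditional covariances therefore have increments that
are images of the increments of `k`, and uniform limits pass through the finite recursion.
-/

theorem lt_apply_succ_of_lt_apply_one {α : Type*} [Preorder α] {u : ℕ → α} {b : α} {n : ℕ}
    (hb : b < u 1) (hu : ∀ j, 1 ≤ j → j + 1 ≤ n → u j < u (j + 1)) {j : ℕ} (hj : j < n) :
    b < u (j + 1) := by
  have hmono : StrictMonoOn u (Icc 1 n) :=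
    strictMonoOn_of_lt_succ ordConnected_Icc fun i _ hi hi' => hu i hi.1 hi'.2
  exact hb.trans_le (hmono.monotoneOn ⟨le_rfl, by lia⟩ ⟨by lia, hj⟩ (by lia))

section CondRec

variable {k f : ℝ → ℝ → ℝ} {T : ℕ → ℝ}

theorem condRec_self (j : ℕ) : condRec k T k j = condCov k T j := by
  induction j with
  | zero => rfl
  | succ j ih =>
    funext t S
    simp only [condRec, condCov, ih]
    ring

theorem condRec_sub_comp_mul (x y c : ℝ → ℝ) (j : ℕ) (t S : ℝ) :
    condRec k T (fun t S => (f (x t) S - f (y t) S) * c t) j t S =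
      (condRec k T f j (x t) S - condRec k T f j (y t) S) * c t := by
  induction j generalizing S with
  | zero => rfl
  | succ j ih =>
    simp only [condRec, ih]
    ring

theorem condRec_succ_eq_sub_div_mul (j : ℕ) (t S : ℝ) :
    condRec k T f (j + 1) t S =
      condRec k T f j t S -
        condRec k T f j t (T (j + 1)) / condCov k T j (T (j + 1)) (T (j + 1)) *
          condCov k T j S (T (j + 1)) := by
  rw [condRec]
  ring

variable {ι : Type*} {l : Filter ι} {s U : Set ℝ}

theorem tendstoUniformlyOn_condRec {F : ι → ℝ → ℝ → ℝ} {j : ℕ} (hT : ∀ i < j, T (i + 1) ∈ U)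
    (hF : ∀ S ∈ U, TendstoUniformlyOn (fun i t => F i t S) (fun t => f t S) l s)
    {S : ℝ} (hS : S ∈ U) :
    TendstoUniformlyOn (fun i t => condRec k T (F i) j t S) (fun t => condRec k T f j t S) l s := by
  induction j generalizing S with
  | zero => exact hF S hS
  | succ j ih =>
    have ih' {S : ℝ} (hS : S ∈ U) := ih (fun i hi => hT i (hi.trans j.lt_succ_self)) hS
    exact (ih' hS).sub
      (Real.uniformContinuous_const_mul.comp_tendstoUniformlyOn (ih' (hT j j.lt_succ_self)))

theorem tendstoUniformlyOn_condCov_increment {ρ : ℝ → ℝ → ℝ} {x : ι → ℝ → ℝ} {a : ℝ} {c : ι → ℝ}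
    {j : ℕ} (hT : ∀ i < j, T (i + 1) ∈ U)
    (hA : ∀ S ∈ U, TendstoUniformlyOn
      (fun i t => (k (x i t) S - k a S) * c i) (fun t => ρ t S) l s)
    {S : ℝ} (hS : S ∈ U) :
    TendstoUniformlyOn (fun i t => (condCov k T j (x i t) S - condCov k T j a S) * c i)
      (fun t => condRec k T ρ j t S) l s := by
  simpa only [condRec_sub_comp_mul _ (fun _ => a) (fun _ => c _), condRec_self] using
    tendstoUniformlyOn_condRec (k := k) hT hA hS

end CondRec

theorem conditional_rho_convergence_general
    {ι : Type*} {l : Filter ι} {s U : Set ℝ} {k ρ : ℝ → ℝ → ℝ} {T : ℕ → ℝ} {n : ℕ}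
    {x : ι → ℝ → ℝ} {a : ℝ} {c : ι → ℝ}
    (hT : ∀ j < n, T (j + 1) ∈ U)
    (hne : ∀ j < n, condCov k T j (T (j + 1)) (T (j + 1)) ≠ 0)
    (hA : ∀ S ∈ U, TendstoUniformlyOn
      (fun i t => (k (x i t) S - k a S) * c i) (fun t => ρ t S) l s) :
    ∀ j < n,
      TendstoUniformlyOn
        (fun i t =>
          (condCov k T j (x i t) (T (j + 1)) / condCov k T j (T (j + 1)) (T (j + 1)) -
            condCov k T j a (T (j + 1)) / condCov k T j (T (j + 1)) (T (j + 1))) * c i)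
        (fun t => condRec k T ρ j t (T (j + 1)) / condCov k T j (T (j + 1)) (T (j + 1))) l s ∧
      (∀ S ∈ U, TendstoUniformlyOn
        (fun i t => (condCov k T (j + 1) (x i t) S - condCov k T (j + 1) a S) * c i)
        (fun t => condRec k T ρ (j + 1) t S) l s) ∧
      ∀ t S : ℝ, condRec k T ρ (j + 1) t S =
        condRec k T ρ j t S -
          condRec k T ρ j t (T (j + 1)) / condCov k T j (T (j + 1)) (T (j + 1)) *
            condCov k T j S (T (j + 1)) := by
  intro j hj
  refine ⟨?_, fun S hS => tendstoUniformlyOn_condCov_increment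
    (fun i hi => hT i (by lia)) hA hS, condRec_succ_eq_sub_div_mul j⟩
  have increment_at_time := tendstoUniformlyOn_condCov_increment
    (fun i hi => hT i (hi.trans hj)) hA (hT j hj)
  simpa only [Function.comp_def, ← sub_div, div_mul_eq_mul_div] using
    (uniformContinuous_div_const' _).comp_tendstoUniformlyOn increment_at_time

/-- Convergence of the rescaled regression coefficients `α_j` and of the rescaled increments
of the conditional covariances `k_j`, under Assumption A.  Here `condCov k T j` is `k_j`,
`condRec k T ρ j` is `ρ̄_j`, the `j`-th time is `T j` (for `j = 1,…,n`), and
`α_{j+1}(t) = condCov k T j t (T (j+1)) / condCov k T j (T (j+1)) (T (j+1))`,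
`ᾱ_{j+1}(t) = condRec k T ρ j t (T (j+1)) / condCov k T j (T (j+1)) (T (j+1))`. -/
theorem conditional_rho_convergence
    (k : ℝ → ℝ → ℝ) (T : ℕ → ℝ) (n : ℕ) (γ : ℝ → ℝ) (ρ : ℝ → ℝ → ℝ)
    (hn : 1 ≤ n)
    (hkcont : ContinuousOn (fun p : ℝ × ℝ => k p.1 p.2) (Ici 0 ×ˢ Ici 0))
    (hksymm : ∀ t s, k t s = k s t)
    (hT1 : 0 < T 1)
    (hTmono : ∀ j, 1 ≤ j → j + 1 ≤ n → T j < T (j + 1))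
    (hγpos : ∀ ε : ℝ, 0 < ε → 0 < γ ε)
    (hγ0 : Tendsto γ (𝓝[>] (0:ℝ)) (𝓝 0))
    (hpos : ∀ j < n, 0 < condCov k T j (T (j + 1)) (T (j + 1)))
    (hA : ∀ T' : ℝ, 0 < T' → TendstoUniformlyOn
        (fun ε t => (k (T n + ε * t) T' - k (T n) T') / γ ε)
        (fun t => ρ t T') (𝓝[>] (0:ℝ)) (Icc 0 1)) :
    ∀ j < n,
      (TendstoUniformlyOn
        (fun ε t =>
          (condCov k T j (T n + ε * t) (T (j + 1)) /
              condCov k T j (T (j + 1)) (T (j + 1)) -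
            condCov k T j (T n) (T (j + 1)) /
              condCov k T j (T (j + 1)) (T (j + 1))) / γ ε)
        (fun t => condRec k T ρ j t (T (j + 1)) / condCov k T j (T (j + 1)) (T (j + 1)))
        (𝓝[>] (0:ℝ)) (Icc 0 1)) ∧
      (∀ T' : ℝ, 0 < T' → TendstoUniformlyOn
        (fun ε t =>
          (condCov k T (j + 1) (T n + ε * t) T' - condCov k T (j + 1) (T n) T') / γ ε)
        (fun t => condRec k T ρ (j + 1) t T') (𝓝[>] (0:ℝ)) (Icc 0 1)) ∧
      (∀ t T' : ℝ, condRec k T ρ (j + 1) t T' =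
        condRec k T ρ j t T' -
          condRec k T ρ j t (T (j + 1)) / condCov k T j (T (j + 1)) (T (j + 1)) *
            condCov k T j T' (T (j + 1))) := by
  simpa only [mem_Ioi, ← div_eq_mul_inv] using
    conditional_rho_convergence_general (U := Ioi 0) (c := fun ε => (γ ε)⁻¹)
      (fun _ => lt_apply_succ_of_lt_apply_one hT1 hTmono)
      (fun j hj => (hpos j hj).ne') (by simpa only [mem_Ioi, ← div_eq_mul_inv] using hA)
end

section
/- Fix n ≥ 1 and times 0 < T_1 < … < T_n, and suppose Assumptions A and GD hold and that k_{j-1}(T_j,T_j) > 0 for j = 1,…,n. Then for each j = 1,…,n, the rescaled second difference (k_j(T_n+εt,T_n+εs) − k_j(T_n+εt,T_n) − k_j(T_n,T_n+εs) + k_j(T_n,T_n))/γ_ε² converges, uniformly for (t,s) ∈ [0,1]², as ε → 0⁺, to k̄_j(t,s) = k̄(t,s) − Σ_{ℓ=1}^{j} k_{ℓ-1}(T_ℓ,T_ℓ) ᾱ_ℓ(t) ᾱ_ℓ(s). -/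
open MeasureTheory Filter Topology Set

noncomputable def kbarN (k : ℝ → ℝ → ℝ) (T : ℕ → ℝ) (ρ : ℝ → ℝ → ℝ) (kbar : ℝ → ℝ → ℝ)
    (n : ℕ) (t s : ℝ) : ℝ :=
  kbar t s - ∑ ℓ ∈ Finset.range n, condCov k T ℓ (T (ℓ + 1)) (T (ℓ + 1)) *
    (condRec k T ρ ℓ t (T (ℓ + 1)) / condCov k T ℓ (T (ℓ + 1)) (T (ℓ + 1))) *
    (condRec k T ρ ℓ s (T (ℓ + 1)) / condCov k T ℓ (T (ℓ + 1)) (T (ℓ + 1)))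

/-!
Conditioning on the value at `T_{j+1}` subtracts from the covariance the rank-one kernel
`k_j(t,T_{j+1}) k_j(s,T_{j+1}) / k_j(T_{j+1},T_{j+1})`. The second difference of a product
`f(t) f(s)` is the product of the first differences of `f`, so each conditioning step subtracts a
product of two first differences of `k_j(·,T_{j+1})`, and rescaling by `γ_ε²` rescales each factor
by `γ_ε`. The recursion for `k_j` is linear in the first argument, so these first differences
converge to `ρ̄_j(·,T_{j+1})` by linearity. A product of uniform limits is a uniform limit once
the factors are bounded, and `ρ̄(·,T_ℓ)` is bounded on `[0,1]` because it is a uniform limit of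
continuous functions there.
-/

theorem tendstoUniformlyOn_prod_smul_of_isBounded_image {ι α β M E : Type*}
    [PseudoMetricSpace M] [PseudoMetricSpace E] [Zero M] [Zero E] [SMul M E] [IsBoundedSMul M E]
    {l : Filter ι} {s : Set α} {t : Set β} {F : ι → α → M} {f : α → M} {G : ι → β → E} {g : β → E}
    (hF : TendstoUniformlyOn F f l s) (hG : TendstoUniformlyOn G g l t)
    (hf : Bornology.IsBounded (f '' s)) (hg : Bornology.IsBounded (g '' t)) :
    TendstoUniformlyOn (fun i (p : α × β) => F i p.1 • G i p.2) (fun p => f p.1 • g p.2) l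
      (s ×ˢ t) := by
  have hpair : TendstoUniformlyOn (fun i (p : α × β) => (F i p.1, G i p.2))
      (fun p => (f p.1, g p.2)) l (s ×ˢ t) :=
    fun u hu => (hF.prodMap hG u hu).diag_of_prod
  have hmem : ∀ p ∈ s ×ˢ t, (f p.1, g p.2) ∈ (f '' s) ×ˢ (g '' t) := fun p hp =>
    ⟨mem_image_of_mem f hp.1, mem_image_of_mem g hp.2⟩
  refine (hf.prod hg).thickening.uniformContinuousOn_smul.comp_tendstoUniformlyOn_eventually
    ?_ (fun p hp => Metric.self_subset_thickening one_pos _ (hmem p hp)) hpair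
  filter_upwards [Metric.tendstoUniformlyOn_iff.1 hpair 1 one_pos] with i hi p hp
  exact Metric.mem_thickening_iff.2 ⟨_, hmem p hp, dist_comm (f p.1, g p.2) _ ▸ hi p hp⟩

theorem tendstoUniformlyOn_const_mul {ι α M : Type*} [UniformSpace M] [Mul M]
    [UniformContinuousConstSMul M M] {l : Filter ι} {s : Set α} {F : ι → α → M} {f : α → M}
    (b : M) (hF : TendstoUniformlyOn F f l s) :
    TendstoUniformlyOn (fun i a => b * F i a) (fun a => b * f a) l s :=
  (uniformContinuous_const_smul b).comp_tendstoUniformlyOn hF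

theorem continuousOn_of_tendstoUniformlyOn_mul_sub {f g c : ℝ → ℝ} {x : ℝ} {s : Set ℝ}
    (hs : s ⊆ Ici 0) (hf : ContinuousOn f (Ici x))
    (h : TendstoUniformlyOn (fun ε t => c ε * (f (x + ε * t) - f x)) g (𝓝[>] 0) s) :
    ContinuousOn g s := by
  refine h.continuousOn (Eventually.frequently ?_)
  filter_upwards [self_mem_nhdsWithin] with ε hε
  have hmaps : MapsTo (fun t => x + ε * t) s (Ici x) := fun t ht =>
    (le_add_of_nonneg_right (mul_nonneg (le_of_lt hε) (hs ht)) : x ≤ x + ε * t)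
  exact continuousOn_const.mul ((hf.comp (by fun_prop) hmaps).sub continuousOn_const)

/-- The mixed second difference of a two-variable function over the rectangle with opposite corners
`(x, x)` and `(t, s)`; for the covariance of a process `X` it is the covariance of the increments
`X t - X x` and `X s - X x`. -/
def secondDifference {α G : Type*} [AddGroup G] (k : α → α → G) (x t s : α) : G :=
  k t s - k t x - k x s + k x x

theorem condCov_succ_sub (k : ℝ → ℝ → ℝ) (T : ℕ → ℝ) (j : ℕ) (x t S : ℝ) :
    condCov k T (j + 1) t S - condCov k T (j + 1) x S =
      (condCov k T j t S - condCov k T j x S) -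
        condCov k T j S (T (j + 1)) / condCov k T j (T (j + 1)) (T (j + 1)) *
          (condCov k T j t (T (j + 1)) - condCov k T j x (T (j + 1))) := by
  simp only [condCov]
  ring

theorem secondDifference_condCov_succ (k : ℝ → ℝ → ℝ) (T : ℕ → ℝ) (j : ℕ) (x t s : ℝ) :
    secondDifference (condCov k T (j + 1)) x t s =
      secondDifference (condCov k T j) x t s -
        (condCov k T j (T (j + 1)) (T (j + 1)))⁻¹ *
          ((condCov k T j t (T (j + 1)) - condCov k T j x (T (j + 1))) *
            (condCov k T j s (T (j + 1)) - condCov k T j x (T (j + 1)))) := by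
  simp only [secondDifference, condCov]
  ring

theorem kbarN_succ {k : ℝ → ℝ → ℝ} {T : ℕ → ℝ} {j : ℕ} (ρ kbar : ℝ → ℝ → ℝ)
    (hne : condCov k T j (T (j + 1)) (T (j + 1)) ≠ 0) (t s : ℝ) :
    kbarN k T ρ kbar (j + 1) t s =
      kbarN k T ρ kbar j t s - (condCov k T j (T (j + 1)) (T (j + 1)))⁻¹ *
        (condRec k T ρ j t (T (j + 1)) * condRec k T ρ j s (T (j + 1))) := by
  simp only [kbarN, Finset.sum_range_succ]
  field_simp
  ring

theorem isBounded_image_condRec {k ρ : ℝ → ℝ → ℝ} {T : ℕ → ℝ} {s : Set ℝ} {j : ℕ} {S : ℝ}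
    (hρT : ∀ ℓ < j, Bornology.IsBounded ((ρ · (T (ℓ + 1))) '' s))
    (hρS : Bornology.IsBounded ((ρ · S) '' s)) :
    Bornology.IsBounded ((condRec k T ρ j · S) '' s) := by
  induction j generalizing S with
  | zero => exact hρS
  | succ j ih =>
    have ih' {S : ℝ} (hS : Bornology.IsBounded ((ρ · S) '' s)) :=
      ih (fun ℓ hℓ => hρT ℓ (hℓ.trans j.lt_succ_self)) hS
    have hlast := ih' (hρT j j.lt_succ_self)
    refine ((ih' hρS).sub (hlast.smul₀
      (condCov k T j S (T (j + 1)) / condCov k T j (T (j + 1)) (T (j + 1))))).subset ?_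
    rintro _ ⟨t, ht, rfl⟩
    exact sub_mem_sub (mem_image_of_mem _ ht) (smul_mem_smul_set (mem_image_of_mem _ ht))

section Convergence

variable {ι : Type*} {l : Filter ι} {c : ι → ℝ} {y : ι → ℝ → ℝ} {x : ℝ} {s : Set ℝ}
  {k ρ : ℝ → ℝ → ℝ} {T : ℕ → ℝ} {j : ℕ}

theorem tendstoUniformlyOn_condCov_sub {S : ℝ}
    (hT : ∀ ℓ < j, TendstoUniformlyOn
      (fun i t => c i * (k (y i t) (T (ℓ + 1)) - k x (T (ℓ + 1)))) (ρ · (T (ℓ + 1))) l s)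
    (hS : TendstoUniformlyOn (fun i t => c i * (k (y i t) S - k x S)) (ρ · S) l s) :
    TendstoUniformlyOn (fun i t => c i * (condCov k T j (y i t) S - condCov k T j x S))
      (condRec k T ρ j · S) l s := by
  induction j generalizing S with
  | zero => exact hS
  | succ j ih =>
    have ih' {S : ℝ}
        (hS : TendstoUniformlyOn (fun i t => c i * (k (y i t) S - k x S)) (ρ · S) l s) :=
      ih (fun ℓ hℓ => hT ℓ (hℓ.trans j.lt_succ_self)) hS
    have hlast := ih' (hT j j.lt_succ_self)
    refine ((ih' hS).sub (tendstoUniformlyOn_const_mul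
      (condCov k T j S (T (j + 1)) / condCov k T j (T (j + 1)) (T (j + 1))) hlast)).congr
      (Eventually.of_forall fun i t _ => ?_)
    simp only [condCov_succ_sub, Pi.sub_apply]
    ring

/-- In the case of interest `y ε t = T_n + ε t`, `x = T_n` and `c ε = 1 / γ_ε`; multiplying by `c`
rather than dividing by `γ` avoids the junk value at `γ = 0`. -/
theorem conditional_secondDifference_convergence_general {kbar : ℝ → ℝ → ℝ}
    (hne : ∀ ℓ < j, condCov k T ℓ (T (ℓ + 1)) (T (ℓ + 1)) ≠ 0)
    (hρ : ∀ ℓ < j, Bornology.IsBounded ((ρ · (T (ℓ + 1))) '' s))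
    (hA : ∀ ℓ < j, TendstoUniformlyOn
      (fun i t => c i * (k (y i t) (T (ℓ + 1)) - k x (T (ℓ + 1)))) (ρ · (T (ℓ + 1))) l s)
    (hGD : TendstoUniformlyOn
      (fun i (p : ℝ × ℝ) => c i ^ 2 * secondDifference k x (y i p.1) (y i p.2))
      (fun p => kbar p.1 p.2) l (s ×ˢ s)) :
    TendstoUniformlyOn
      (fun i (p : ℝ × ℝ) => c i ^ 2 * secondDifference (condCov k T j) x (y i p.1) (y i p.2))
      (fun p => kbarN k T ρ kbar j p.1 p.2) l (s ×ˢ s) := by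
  induction j with
  | zero => simpa only [condCov, kbarN, Finset.range_zero, Finset.sum_empty, sub_zero] using hGD
  | succ j ih =>
    have hlt {ℓ : ℕ} (hℓ : ℓ < j) : ℓ < j + 1 := hℓ.trans j.lt_succ_self
    have hsecond := ih (fun ℓ hℓ => hne ℓ (hlt hℓ)) (fun ℓ hℓ => hρ ℓ (hlt hℓ))
      (fun ℓ hℓ => hA ℓ (hlt hℓ))
    have hfirst := tendstoUniformlyOn_condCov_sub (fun ℓ hℓ => hA ℓ (hlt hℓ))
      (hA j j.lt_succ_self)
    have hbdd := isBounded_image_condRec (k := k) (fun ℓ hℓ => hρ ℓ (hlt hℓ))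
      (hρ j j.lt_succ_self)
    have hprod := tendstoUniformlyOn_prod_smul_of_isBounded_image hfirst hfirst hbdd hbdd
    refine ((hsecond.sub (tendstoUniformlyOn_const_mul
      (condCov k T j (T (j + 1)) (T (j + 1)))⁻¹ hprod)).congr
        (Eventually.of_forall fun i p _ => ?_)).congr_right fun p _ => ?_
    · simp only [secondDifference_condCov_succ, Pi.sub_apply, smul_eq_mul]
      ring
    · exact (kbarN_succ ρ kbar (hne j j.lt_succ_self) p.1 p.2).symm

end Convergence

/-- Under Assumptions A and GD, the rescaled second difference of the conditional covariance
`k_j` converges uniformly on `[0,1]²` to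
`k̄_j(t,s) = k̄(t,s) − Σ_{ℓ=1}^{j} k_{ℓ-1}(T_ℓ,T_ℓ) ᾱ_ℓ(t) ᾱ_ℓ(s) = kbarN k T ρ kbar j t s`. -/
theorem conditional_secondDifference_convergence
    (k : ℝ → ℝ → ℝ) (T : ℕ → ℝ) (n : ℕ) (γ : ℝ → ℝ) (ρ : ℝ → ℝ → ℝ) (kbar : ℝ → ℝ → ℝ)
    (hn : 1 ≤ n)
    (hkcont : ContinuousOn (fun p : ℝ × ℝ => k p.1 p.2) (Ici 0 ×ˢ Ici 0))
    (hksymm : ∀ t s, k t s = k s t)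
    (hT1 : 0 < T 1)
    (hTmono : ∀ j, 1 ≤ j → j + 1 ≤ n → T j < T (j + 1))
    (hγpos : ∀ ε : ℝ, 0 < ε → 0 < γ ε)
    (hγ0 : Tendsto γ (𝓝[>] (0:ℝ)) (𝓝 0))
    (hpos : ∀ j < n, 0 < condCov k T j (T (j + 1)) (T (j + 1)))
    (hA : ∀ T' : ℝ, 0 < T' → TendstoUniformlyOn
        (fun ε t => (k (T n + ε * t) T' - k (T n) T') / γ ε)
        (fun t => ρ t T') (𝓝[>] (0:ℝ)) (Icc 0 1))
    (hGD : TendstoUniformlyOn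
        (fun ε (p : ℝ × ℝ) =>
          (k (T n + ε * p.1) (T n + ε * p.2) - k (T n + ε * p.1) (T n) -
            k (T n) (T n + ε * p.2) + k (T n) (T n)) / (γ ε) ^ 2)
        (fun p => kbar p.1 p.2) (𝓝[>] (0:ℝ)) (Icc 0 1 ×ˢ Icc 0 1))
    :
    ∀ j, 1 ≤ j → j ≤ n → TendstoUniformlyOn
      (fun ε (p : ℝ × ℝ) =>
        (condCov k T j (T n + ε * p.1) (T n + ε * p.2) -
          condCov k T j (T n + ε * p.1) (T n) -
          condCov k T j (T n) (T n + ε * p.2) +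
          condCov k T j (T n) (T n)) / (γ ε) ^ 2)
      (fun p => kbarN k T ρ kbar j p.1 p.2) (𝓝[>] (0:ℝ)) (Icc 0 1 ×ˢ Icc 0 1) := by
  intro j _ hjn
  have hTpos : ∀ m, 1 ≤ m → m ≤ n → 0 < T m := fun m hm =>
    Nat.le_induction (fun _ => hT1)
      (fun i hi ih hin => (ih (by omega)).trans (hTmono i hi hin)) m hm
  simp only [div_eq_inv_mul, ← inv_pow] at hA hGD ⊢
  have hkT : ∀ S, 0 < S → ContinuousOn (k · S) (Ici (T n)) := fun S hS =>
    hkcont.comp (f := fun t : ℝ => (t, S)) (by fun_prop)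
      fun t ht => ⟨(hTpos n hn le_rfl).le.trans ht, hS.le⟩
  have hρ : ∀ S, 0 < S → Bornology.IsBounded ((ρ · S) '' Icc 0 1) := fun S hS =>
    (isCompact_Icc.image_of_continuousOn (continuousOn_of_tendstoUniformlyOn_mul_sub
      Icc_subset_Ici_self (hkT S hS) (hA S hS))).isBounded
  have hTj : ∀ ℓ < j, 0 < T (ℓ + 1) := fun ℓ hℓ => hTpos (ℓ + 1) (by omega) (by omega)
  exact conditional_secondDifference_convergence_general
    (fun ℓ hℓ => (hpos ℓ (hℓ.trans_le hjn)).ne') (fun ℓ hℓ => hρ _ (hTj ℓ hℓ))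
    (fun ℓ hℓ => hA _ (hTj ℓ hℓ)) hGD
end

section
/- Let H ∈ (0,1) and k_H(t,s) = (t^{2H} + s^{2H} − |t−s|^{2H})/2. Then for every T_n > 0 and every T > 0, lim_{ε→0⁺} sup_{t∈[0,1]} |k_H(T_n+εt, T) − k_H(T_n, T)| / ε^H = 0. -/
open MeasureTheory Filter Topology Set

/-- The covariance function of fractional Brownian motion with Hurst index `H`. -/
noncomputable def fbmCov (H t s : ℝ) : ℝ := (t ^ (2*H) + s ^ (2*H) - |t - s| ^ (2*H)) / 2

/-! Away from `0` the map `x ↦ ‖x‖ ^ p` is locally Lipschitz, and its increment at `0` is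
`‖h‖ ^ p`; hence each of its increments is `O(‖h‖ ^ min 1 p)`. For `u, u + h ≥ 0`, the increment
of `fbmCov H · s` at `u` combines two of these with `p = 2 * H`, based at `u` and `u - s`, and
`H < min 1 (2 * H)`. Uniformity over `t` in a bounded set comes from substituting `h = ε * t`,
which is `O(ε)`. -/

open Asymptotics

theorem rpow_isLittleO_rpow_nhdsGE_zero {a b : ℝ} (hab : a < b) (hb : b ≠ 0) :
    (fun h : ℝ => h ^ b) =o[𝓝[≥] 0] fun h => h ^ a := by
  have hpos : 0 < b - a := sub_pos.2 hab
  have hlim : Tendsto (fun h : ℝ => h ^ (b - a)) (𝓝[≥] 0) (𝓝 0) := by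
    simpa [Real.zero_rpow hpos.ne'] using
      (Real.continuousAt_rpow_const 0 (b - a) (Or.inr hpos.le)).tendsto.mono_left
        (nhdsWithin_le_nhds (s := Ici 0))
  have hmul : (fun h : ℝ => h ^ (b - a) * h ^ a) =o[𝓝[≥] 0] fun h => 1 * h ^ a :=
    ((isLittleO_one_iff ℝ).2 hlim).mul_isBigO (isBigO_refl _ _)
  refine hmul.congr' ?_ (by simp)
  filter_upwards [self_mem_nhdsWithin] with h hh
  rw [← Real.rpow_add' hh (by simpa using hb), sub_add_cancel]

theorem norm_add_rpow_sub_norm_rpow_isBigO {E : Type*} [NormedAddCommGroup E] (x : E) {p : ℝ}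
    (hp : 0 < p) :
    (fun h => ‖x + h‖ ^ p - ‖x‖ ^ p) =O[𝓝 0] fun h => ‖h‖ ^ min 1 p := by
  have norm_rpow_isBigO {b : ℝ} (hb : 0 < b) (hle : min 1 p ≤ b) :
      (fun h : E => ‖h‖ ^ b) =O[𝓝 0] fun h => ‖h‖ ^ min 1 p :=
    (IsBigO.rpow_rpow_nhdsGE_zero_of_le hle hb.ne').comp_tendsto <|
      tendsto_nhdsWithin_iff.2 ⟨tendsto_norm_zero, .of_forall norm_nonneg⟩
  rcases eq_or_ne x 0 with rfl | hx
  · simpa [Real.zero_rpow hp.ne'] using norm_rpow_isBigO hp (min_le_right 1 p)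
  · have hnorm : Tendsto (fun h => ‖x + h‖) (𝓝 0) (𝓝 ‖x‖) :=
      Continuous.tendsto' (by fun_prop) _ _ (by simp)
    have hpow : (fun y : ℝ => y ^ p - ‖x‖ ^ p) =O[𝓝 ‖x‖] fun y => y - ‖x‖ :=
      (Real.hasDerivAt_rpow_const (Or.inl (norm_ne_zero_iff.2 hx))).isBigO_sub
    have hlip : (fun h => ‖x + h‖ - ‖x‖) =O[𝓝 0] fun h => ‖h‖ ^ (1 : ℝ) :=
      .of_norm_le fun h => by simpa using abs_norm_sub_norm_le (x + h) x
    exact ((hpow.comp_tendsto hnorm).trans hlip).trans (norm_rpow_isBigO one_pos (min_le_left 1 p))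

theorem fbmCov_add_sub_fbmCov_isBigO {H t : ℝ} (hH : 0 < H) (ht : 0 ≤ t) (s : ℝ) :
    (fun h => fbmCov H (t + h) s - fbmCov H t s) =O[𝓝[≥] 0] fun h => h ^ min 1 (2 * H) := by
  have hincr (x : ℝ) : (fun h => |x + h| ^ (2 * H) - |x| ^ (2 * H)) =O[𝓝[≥] 0]
      fun h => |h| ^ min 1 (2 * H) :=
    (norm_add_rpow_sub_norm_rpow_isBigO x (by positivity)).mono nhdsWithin_le_nhds
  refine (((hincr t).sub (hincr (t - s))).const_mul_left (1 / 2)).congr' ?_ ?_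
  all_goals filter_upwards [self_mem_nhdsWithin] with h (hh : 0 ≤ h)
  · rw [fbmCov, fbmCov, abs_of_nonneg ht, abs_of_nonneg (add_nonneg ht hh), sub_add_eq_add_sub]
    ring
  · rw [abs_of_nonneg hh]

theorem tendstoUniformlyOn_norm_comp_mul_div_rpow {E : Type*} [SeminormedAddCommGroup E]
    {f : ℝ → E} {a : ℝ} {s : Set ℝ} (hf : f =o[𝓝[≥] 0] fun h => h ^ a) (ha : 0 ≤ a)
    (hs : Bornology.IsBounded s) (hs0 : s ⊆ Ici 0) :
    TendstoUniformlyOn (fun ε t => ‖f (ε * t)‖ / ε ^ a) (fun _ => 0) (𝓝[>] 0) s := by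
  rw [← tendsto_prod_principal_iff]
  set l : Filter (ℝ × ℝ) := 𝓝[>] 0 ×ˢ 𝓟 s
  have hfst : Tendsto Prod.fst l (𝓝[>] 0) := tendsto_fst
  have hfst_pos : ∀ᶠ q in l, 0 < q.1 := hfst.eventually self_mem_nhdsWithin
  have hsnd : ∀ᶠ q in l, q.2 ∈ s := tendsto_snd.eventually (mem_principal_self s)
  have hmul : (fun q : ℝ × ℝ => q.1 * q.2) =O[l] Prod.fst := by
    obtain ⟨C, hC⟩ := hs.exists_norm_le
    have hone : (Prod.snd : ℝ × ℝ → ℝ) =O[l] fun _ => (1 : ℝ) :=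
      .of_bound C (hsnd.mono fun q hq => by simpa using hC q.2 hq)
    simpa using (isBigO_refl Prod.fst l).mul hone
  have hmul_lim : Tendsto (fun q : ℝ × ℝ => q.1 * q.2) l (𝓝[≥] 0) := by
    refine tendsto_nhdsWithin_iff.2
      ⟨hmul.trans_tendsto (hfst.mono_right nhdsWithin_le_nhds), ?_⟩
    filter_upwards [hfst_pos, hsnd] with q hq1 hq2 using mul_nonneg hq1.le (hs0 hq2)
  have hcomp : (fun q : ℝ × ℝ => f (q.1 * q.2)) =o[l] fun q => q.1 ^ a :=
    (hf.comp_tendsto hmul_lim).trans_isBigO (hmul.rpow ha (hfst_pos.mono fun _ => le_of_lt))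
  exact hcomp.norm_left.tendsto_div_nhds_zero

/-- Assumption A holds for fractional Brownian motion with `γ_ε = ε^H` and `ρ̄ ≡ 0`:
the increment of the covariance in the first variable is `o(ε^H)` uniformly on `[0,1]`. -/
theorem fbm_assumptionA (H : ℝ) (hH : H ∈ Ioo (0:ℝ) 1) (Tn T : ℝ) (hTn : 0 < Tn) (hT : 0 < T) :
    TendstoUniformlyOn
      (fun ε t => |fbmCov H (Tn + ε * t) T - fbmCov H Tn T| / ε ^ H)
      (fun _ => 0) (𝓝[>] (0:ℝ)) (Icc 0 1) := by
  obtain ⟨hH0, hH1⟩ := hH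
  have hexp : H < min 1 (2 * H) := lt_min hH1 (by linarith)
  have hincr : (fun h => fbmCov H (Tn + h) T - fbmCov H Tn T) =o[𝓝[≥] 0] fun h => h ^ H :=
    (fbmCov_add_sub_fbmCov_isBigO hH0 hTn.le T).trans_isLittleO
      (rpow_isLittleO_rpow_nhdsGE_zero hexp (hH0.trans hexp).ne')
  exact tendstoUniformlyOn_norm_comp_mul_div_rpow hincr hH0.le (Metric.isBounded_Icc 0 1)
    Icc_subset_Ici_self
end

section
/- Let H ∈ (0,1), k = k_H with k_H(t,s) = (t^{2H} + s^{2H} − |t−s|^{2H})/2, fix n ≥ 1 and times 0 < T_1 < … < T_n, and assume k_{j-1}(T_j,T_j) > 0 for j = 1,…,n, where k_j is the conditional covariance recursion. Then k_n(T_n+εt, T_n+εs)/ε^{2H} converges, uniformly for (t,s) ∈ [0,1]² as ε → 0⁺, to k_H(t,s). In other words, the asymptotic covariance of the n-fold conditional fractional Brownian motion coincides with the covariance of the unconditioned fractional Brownian motion, independently of the past observations. -/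
/-!
A symmetric conditional covariance vanishes as soon as one argument is the last conditioning time
`τ`, so its value at `(τ + a, τ + b)` is the covariance of the increments of the conditioned process
over `[τ, τ + a]` and `[τ, τ + b]`. Each conditioning step subtracts from this increment covariance
a multiple of a product of two increments of `t ↦ k_j(t, T_{j+1})`, one over each interval.
For fractional Brownian motion these functions are either differentiable at `τ > 0` or have the cusp
`|t - τ|^{2H}` there, so their increments are `o(|a|^H)`, and conditioning costs only
`o(|a|^H |b|^H) = o(‖(a, b)‖^{2H})`. The increment covariance of the unconditioned process does not
depend on `τ` and is homogeneous of degree `2H`, which is why it survives the rescaling.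
-/

open MeasureTheory Filter Topology Set

open Asymptotics Bornology

section Rescaling

variable {E F : Type*} [SeminormedAddCommGroup E] [SeminormedAddCommGroup F]

theorem isLittleO_norm_rpow_norm_rpow {p q : ℝ} (hq : 0 ≤ q) (hqp : q < p) :
    (fun x : E => ‖x‖ ^ p) =o[𝓝 0] fun x => ‖x‖ ^ q := by
  have hpq : 0 < p - q := sub_pos.2 hqp
  have hzero : (fun x : E => ‖x‖ ^ (p - q)) =o[𝓝 0] fun _ => (1 : ℝ) := by
    rw [isLittleO_one_iff]
    simpa [Real.zero_rpow hpq.ne'] using tendsto_norm_zero.rpow_const (Or.inr hpq.le)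
  refine (hzero.mul_isBigO (isBigO_refl (fun x : E => ‖x‖ ^ q) _)).congr (fun x => ?_) fun x => ?_
  · rw [← Real.rpow_add_of_nonneg (norm_nonneg x) hpq.le hq, sub_add_cancel]
  · rw [one_mul]

theorem isBigO_norm_fst_rpow_mul_norm_snd_rpow {r : ℝ} (hr : 0 ≤ r) (l : Filter (E × F)) :
    (fun p : E × F => ‖p.1‖ ^ r * ‖p.2‖ ^ r) =O[l] fun p => ‖p‖ ^ (2 * r) := by
  have hnonneg : 0 ≤ᶠ[l] fun p : E × F => ‖p‖ := .of_forall norm_nonneg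
  refine ((isBigO_fst_prod'.norm_norm.rpow hr hnonneg).mul
    (isBigO_snd_prod'.norm_norm.rpow hr hnonneg)).congr_right fun p => ?_
  rw [two_mul, Real.rpow_add_of_nonneg (norm_nonneg p) hr hr]

variable [NormedSpace ℝ E]

theorem tendstoUniformlyOn_smul_div_rpow_of_isLittleO {f h : E → ℝ} {s : Set E} {r : ℝ}
    (hr : 0 ≤ r) (hs : IsBounded s) (hh : ∀ ε > 0, ∀ x ∈ s, h (ε • x) = ε ^ r * h x)
    (hfh : (fun x => f x - h x) =o[𝓝 0] fun x => ‖x‖ ^ r) :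
    TendstoUniformlyOn (fun ε x => f (ε • x) / ε ^ r) h (𝓝[>] 0) s := by
  have hpos : ∀ᶠ q : ℝ × E in 𝓝[>] 0 ×ˢ 𝓟 s, 0 < q.1 :=
    tendsto_fst.eventually self_mem_nhdsWithin
  have hmem : ∀ᶠ q : ℝ × E in 𝓝[>] 0 ×ˢ 𝓟 s, q.2 ∈ s :=
    tendsto_snd.eventually (mem_principal_self s)
  have hsmul : Tendsto (fun q : ℝ × E => q.1 • q.2) (𝓝[>] 0 ×ˢ 𝓟 s) (𝓝 0) :=
    (NormedSpace.isVonNBounded_of_isBounded ℝ hs).smul_tendsto_zero hmem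
      (tendsto_fst.mono_right nhdsWithin_le_nhds)
  have hbound : (fun q : ℝ × E => ‖q.1 • q.2‖ ^ r) =O[𝓝[>] 0 ×ˢ 𝓟 s] fun q => q.1 ^ r := by
    obtain ⟨R, hR⟩ := hs.exists_norm_le
    refine .of_bound (R ^ r) ?_
    filter_upwards [hpos, hmem] with q hq hqs
    rw [norm_smul, Real.norm_of_nonneg hq.le, Real.mul_rpow hq.le (norm_nonneg _),
      Real.norm_of_nonneg (by positivity), Real.norm_of_nonneg (by positivity), mul_comm]
    gcongr
    exact hR _ hqs
  rw [tendstoUniformlyOn_iff_tendsto, uniformity_eq_comap_nhds_zero, tendsto_comap_iff]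
  refine ((hfh.comp_tendsto hsmul).trans_isBigO hbound).tendsto_div_nhds_zero.congr' ?_
  filter_upwards [hpos, hmem] with q hq hqs
  simp only [Function.comp_apply, hh q.1 hq q.2 hqs]
  rw [sub_div, mul_div_cancel_left₀ _ (Real.rpow_pos_of_pos hq r).ne']

end Rescaling

theorem isLittleO_add_sub_norm_rpow_of_differentiableAt {E F : Type*} [NormedAddCommGroup E]
    [NormedSpace ℝ E] [NormedAddCommGroup F] [NormedSpace ℝ F] {f : E → F} {x : E} {r : ℝ}
    (hf : DifferentiableAt ℝ f x) (hr0 : 0 ≤ r) (hr1 : r < 1) :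
    (fun v => f (x + v) - f x) =o[𝓝 0] fun v => ‖v‖ ^ r := by
  have htranslate : Tendsto (fun v => x + v) (𝓝 0) (𝓝 x) := by
    simpa using (continuous_const_add x).tendsto 0
  have hlinear : (fun v => f (x + v) - f x) =O[𝓝 0] fun v => ‖v‖ := by
    simpa [Function.comp_def] using (hf.isBigO_sub.comp_tendsto htranslate).norm_right
  exact hlinear.trans_isLittleO (by simpa using isLittleO_norm_rpow_norm_rpow (E := E) hr0 hr1)

section Conditioning

variable {k : ℝ → ℝ → ℝ} {T : ℕ → ℝ} {j : ℕ}

theorem condCov_comm (hk : ∀ t s, k t s = k s t) (T : ℕ → ℝ) (j : ℕ) (t s : ℝ) :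
    condCov k T j t s = condCov k T j s t := by
  induction j generalizing t s with
  | zero => exact hk t s
  | succ j ih =>
    simp only [condCov]
    rw [ih t s]
    ring

theorem condCov_succ_apply_left (hk : ∀ t s, k t s = k s t)
    (hj : condCov k T j (T (j + 1)) (T (j + 1)) ≠ 0) (s : ℝ) :
    condCov k T (j + 1) (T (j + 1)) s = 0 := by
  simp only [condCov]
  rw [div_self hj, one_mul, condCov_comm hk T j s, sub_self]

theorem condCov_succ_apply_right (hk : ∀ t s, k t s = k s t)
    (hj : condCov k T j (T (j + 1)) (T (j + 1)) ≠ 0) (t : ℝ) :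
    condCov k T (j + 1) t (T (j + 1)) = 0 := by
  rw [condCov_comm hk, condCov_succ_apply_left hk hj]

/-- The covariance of the increments `X (τ + a) - X τ` and `X (τ + b) - X τ` of a process `X` with
covariance function `k`. -/
def incrementCov (k : ℝ → ℝ → ℝ) (τ a b : ℝ) : ℝ :=
  k (τ + a) (τ + b) - k (τ + a) τ - k τ (τ + b) + k τ τ

theorem incrementCov_condCov_succ_self (hk : ∀ t s, k t s = k s t)
    (hj : condCov k T j (T (j + 1)) (T (j + 1)) ≠ 0) (a b : ℝ) :
    incrementCov (condCov k T (j + 1)) (T (j + 1)) a b =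
      condCov k T (j + 1) (T (j + 1) + a) (T (j + 1) + b) := by
  simp only [incrementCov, condCov_succ_apply_left hk hj, condCov_succ_apply_right hk hj,
    sub_zero, add_zero]

theorem incrementCov_condCov_succ (k : ℝ → ℝ → ℝ) (T : ℕ → ℝ) (j : ℕ) (τ a b : ℝ) :
    incrementCov (condCov k T (j + 1)) τ a b =
      incrementCov (condCov k T j) τ a b -
        (condCov k T j (T (j + 1)) (T (j + 1)))⁻¹ *
          ((condCov k T j (τ + a) (T (j + 1)) - condCov k T j τ (T (j + 1))) *
            (condCov k T j (τ + b) (T (j + 1)) - condCov k T j τ (T (j + 1)))) := by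
  simp only [incrementCov, condCov]
  ring

variable {τ : ℝ} {l : Filter ℝ} {g : ℝ → ℝ}

theorem isLittleO_condCov_add_sub (hinc : ∀ s, (fun a => k (τ + a) s - k τ s) =o[l] g)
    (T : ℕ → ℝ) (j : ℕ) (s : ℝ) :
    (fun a => condCov k T j (τ + a) s - condCov k T j τ s) =o[l] g := by
  induction j generalizing s with
  | zero => exact hinc s
  | succ j ih =>
    refine ((ih s).sub ((ih (T (j + 1))).const_mul_left
      (condCov k T j s (T (j + 1)) / condCov k T j (T (j + 1)) (T (j + 1))))).congr_left
        fun a => ?_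
    simp only [condCov]
    ring

theorem isLittleO_incrementCov_condCov_sub (hinc : ∀ s, (fun a => k (τ + a) s - k τ s) =o[l] g)
    (T : ℕ → ℝ) (j : ℕ) :
    (fun p : ℝ × ℝ => incrementCov (condCov k T j) τ p.1 p.2 - incrementCov k τ p.1 p.2)
      =o[l ×ˢ l] fun p => g p.1 * g p.2 := by
  induction j with
  | zero => simp [condCov]
  | succ j ih =>
    have hstep := isLittleO_condCov_add_sub hinc T j (T (j + 1))
    have hprod := (hstep.comp_tendsto (tendsto_fst (g := l))).mul
      (hstep.comp_tendsto (tendsto_snd (f := l)))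
    refine (ih.sub (hprod.const_mul_left
      (condCov k T j (T (j + 1)) (T (j + 1)))⁻¹)).congr_left fun p => ?_
    simp only [incrementCov_condCov_succ, Function.comp_apply]
    ring

end Conditioning

section FractionalBrownianMotion

variable {H : ℝ}

theorem fbmCov_comm (H t s : ℝ) : fbmCov H t s = fbmCov H s t := by
  simp only [fbmCov, abs_sub_comm t s, add_comm (t ^ (2 * H))]

/-- The covariance function of two-sided fractional Brownian motion, indexed by all of `ℝ`; the
absolute values are needed because `fbmCov` takes real powers of its arguments, which are junk at
negative times. -/
noncomputable def twoSidedFbmCov (H t s : ℝ) : ℝ :=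
  (|t| ^ (2 * H) + |s| ^ (2 * H) - |t - s| ^ (2 * H)) / 2

theorem twoSidedFbmCov_of_nonneg {t s : ℝ} (ht : 0 ≤ t) (hs : 0 ≤ s) :
    twoSidedFbmCov H t s = fbmCov H t s := by
  rw [twoSidedFbmCov, fbmCov, abs_of_nonneg ht, abs_of_nonneg hs]

theorem twoSidedFbmCov_mul_mul (H c t s : ℝ) :
    twoSidedFbmCov H (c * t) (c * s) = |c| ^ (2 * H) * twoSidedFbmCov H t s := by
  simp only [twoSidedFbmCov, ← mul_sub, abs_mul, Real.mul_rpow (abs_nonneg _) (abs_nonneg _)]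
  ring

theorem incrementCov_fbmCov (hH : H ≠ 0) (τ a b : ℝ) :
    incrementCov (fbmCov H) τ a b = twoSidedFbmCov H a b := by
  have hzero : (0 : ℝ) ^ (2 * H) = 0 := Real.zero_rpow (mul_ne_zero two_ne_zero hH)
  simp only [incrementCov, fbmCov, twoSidedFbmCov, add_sub_add_left_eq_sub, add_sub_cancel_left,
    sub_add_cancel_left, abs_neg, sub_self, abs_zero, hzero]
  ring

theorem isLittleO_abs_add_sub_rpow_sub (hH0 : 0 < H) (hH1 : H < 1) (τ s : ℝ) :
    (fun a => |τ + a - s| ^ (2 * H) - |τ - s| ^ (2 * H)) =o[𝓝 0] fun a => ‖a‖ ^ H := by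
  rcases eq_or_ne τ s with rfl | hne
  · have hzero : (0 : ℝ) ^ (2 * H) = 0 := Real.zero_rpow (by positivity)
    simpa [hzero] using isLittleO_norm_rpow_norm_rpow (E := ℝ) hH0.le (by linarith : H < 2 * H)
  · have hτs : τ - s ≠ 0 := sub_ne_zero.2 hne
    have hdiff : DifferentiableAt ℝ (fun t => |t - s| ^ (2 * H)) τ :=
      ((differentiableAt_id.sub_const s).abs hτs).rpow_const (Or.inl (abs_ne_zero.2 hτs))
    exact isLittleO_add_sub_norm_rpow_of_differentiableAt hdiff hH0.le hH1

theorem isLittleO_fbmCov_add_sub (hH : H ∈ Ioo (0 : ℝ) 1) {τ : ℝ} (hτ : τ ≠ 0) (s : ℝ) :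
    (fun a => fbmCov H (τ + a) s - fbmCov H τ s) =o[𝓝 0] fun a => ‖a‖ ^ H := by
  have hpow : (fun a => (τ + a) ^ (2 * H) - τ ^ (2 * H)) =o[𝓝 0] fun a => ‖a‖ ^ H :=
    isLittleO_add_sub_norm_rpow_of_differentiableAt
      (Real.differentiableAt_rpow_const_of_ne _ hτ) hH.1.le hH.2
  refine ((hpow.sub (isLittleO_abs_add_sub_rpow_sub hH.1 hH.2 τ s)).const_mul_left 2⁻¹).congr_left
    fun a => ?_
  simp only [fbmCov]
  ring

theorem isLittleO_condCov_fbmCov_sub_twoSidedFbmCov (hH : H ∈ Ioo (0 : ℝ) 1) {T : ℕ → ℝ} {j : ℕ}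
    (hT : T (j + 1) ≠ 0) (hj : condCov (fbmCov H) T j (T (j + 1)) (T (j + 1)) ≠ 0) :
    (fun p : ℝ × ℝ => condCov (fbmCov H) T (j + 1) (T (j + 1) + p.1) (T (j + 1) + p.2) -
      twoSidedFbmCov H p.1 p.2) =o[𝓝 0] fun p => ‖p‖ ^ (2 * H) := by
  have hcond := isLittleO_incrementCov_condCov_sub (isLittleO_fbmCov_add_sub hH hT) T (j + 1)
  simp only [incrementCov_condCov_succ_self (fbmCov_comm H) hj, incrementCov_fbmCov hH.1.ne',
    ← nhds_prod_eq] at hcond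
  exact hcond.trans_isBigO (isBigO_norm_fst_rpow_mul_norm_snd_rpow hH.1.le _)

end FractionalBrownianMotion

theorem fbm_conditional_covariance_asymptotics_general
    (H : ℝ) (hH : H ∈ Ioo (0 : ℝ) 1) (T : ℕ → ℝ) (n : ℕ) (hn : 1 ≤ n)
    (hT : ∀ j, 1 ≤ j → j ≤ n → 0 < T j)
    (hpos : ∀ j < n, 0 < condCov (fbmCov H) T j (T (j + 1)) (T (j + 1)))
    {s : Set (ℝ × ℝ)} (hs : IsBounded s) :
    TendstoUniformlyOn
      (fun ε (p : ℝ × ℝ) =>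
        condCov (fbmCov H) T n (T n + ε * p.1) (T n + ε * p.2) / ε ^ (2 * H))
      (fun p => twoSidedFbmCov H p.1 p.2) (𝓝[>] (0 : ℝ)) s := by
  obtain ⟨m, rfl⟩ := Nat.exists_eq_add_of_le' hn
  have hasymp := isLittleO_condCov_fbmCov_sub_twoSidedFbmCov hH (hT _ hn le_rfl).ne'
    (hpos m m.lt_succ_self).ne'
  refine tendstoUniformlyOn_smul_div_rpow_of_isLittleO (mul_nonneg zero_le_two hH.1.le) hs
    (fun ε hε p _ => ?_) hasymp
  simp [twoSidedFbmCov_mul_mul, abs_of_pos hε]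

/-- For fractional Brownian motion, the covariance of the `n`-fold conditional process,
rescaled by `ε^{2H}`, converges uniformly on `[0,1]²` to the covariance of the
unconditioned fBm: the asymptotics do not depend on the past observations. -/
theorem fbm_conditional_covariance_asymptotics
    (H : ℝ) (hH : H ∈ Ioo (0:ℝ) 1) (T : ℕ → ℝ) (n : ℕ)
    (hn : 1 ≤ n)
    (hT1 : 0 < T 1)
    (hTmono : ∀ j, 1 ≤ j → j + 1 ≤ n → T j < T (j + 1))
    (hpos : ∀ j < n, 0 < condCov (fbmCov H) T j (T (j + 1)) (T (j + 1))) :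
    TendstoUniformlyOn
      (fun ε (p : ℝ × ℝ) =>
        condCov (fbmCov H) T n (T n + ε * p.1) (T n + ε * p.2) / ε ^ (2*H))
      (fun p => fbmCov H p.1 p.2) (𝓝[>] (0:ℝ)) (Icc 0 1 ×ˢ Icc 0 1) := by
  have hT : ∀ j, 1 ≤ j → j ≤ n → 0 < T j := fun j hj hjn =>
    hT1.trans_le ((strictMonoOn_of_lt_succ ordConnected_Icc fun i _ hi hi' =>
      hTmono i hi.1 hi'.2).monotoneOn ⟨le_rfl, hn⟩ ⟨hj, hjn⟩ hj)
  exact (fbm_conditional_covariance_asymptotics_general H hH T n hn hT hpos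
    ((Metric.isBounded_Icc 0 1).prod (Metric.isBounded_Icc 0 1))).congr_right
    fun p hp => twoSidedFbmCov_of_nonneg hp.1.1 hp.2.1
end

section
/- Let κ : [0,∞)×[0,∞) → ℝ be continuous and let k(t,s) = ∫_0^t ∫_0^s κ(u,v) du dv (the covariance of the integrated Gaussian process X_t = ∫_0^t Z_u du when κ is the covariance of Z). Fix T_n > 0. Then: (i) (k(T_n+εt,T_n+εs) − k(T_n+εt,T_n) − k(T_n,T_n+εs) + k(T_n,T_n))/ε² converges, uniformly for (t,s) ∈ [0,1]² as ε → 0⁺, to t·s·κ(T_n,T_n); and (ii) for every T > 0, (k(T_n+εt,T) − k(T_n,T))/ε converges, uniformly in t ∈ [0,1] as ε → 0⁺, to t·∫_0^T κ(T_n,v) dv. -/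
open MeasureTheory Filter Topology Set

/-- The covariance function `k(t,s) = ∫_0^t ∫_0^s κ(u,v) dv du` of the integrated Gaussian
process `X_t = ∫_0^t Z_u du`, where `κ` is the covariance of `Z`. -/
noncomputable def intCov (κ : ℝ → ℝ → ℝ) (t s : ℝ) : ℝ :=
  ∫ u in (0:ℝ)..t, ∫ v in (0:ℝ)..s, κ u v

/-! A rectangular increment of `k` is the integral of `κ` over the rectangle, so at `(T_n, T_n)` it
equals `h₁ h₂ κ(T_n, T_n) + o(h₁ h₂)`; likewise `k(T_n + h, T) - k(T_n, T)` equals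
`h ∫_0^T κ(T_n, v) dv + o(h)`. Both leading terms are homogeneous, of degree two and one, and
rescaling an expansion with a homogeneous leading term converges uniformly on bounded sets. Only
the values of `κ` on the closed quadrant enter, so `κ` may be extended continuously to the plane. -/

lemma tendstoUniformlyOn_of_filter_le {ι α β : Type*} [UniformSpace β] {F : ι → α → β} {f : α → β}
    {p q : Filter ι} {s : Set α} (h : TendstoUniformlyOn F f q s) (hpq : p ≤ q) :
    TendstoUniformlyOn F f p s :=
  fun U hU => (h U hU).filter_mono hpq

lemma exists_continuous_uncurry_eqOn {X Y : Type*} [TopologicalSpace X] [TopologicalSpace Y]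
    [NormalSpace (X × Y)] {κ : X → Y → ℝ} {s : Set (X × Y)} (hs : IsClosed s)
    (hκ : ContinuousOn (Function.uncurry κ) s) :
    ∃ K : X → Y → ℝ, Continuous (Function.uncurry K) ∧
      EqOn (Function.uncurry κ) (Function.uncurry K) s := by
  obtain ⟨g, hg⟩ := ContinuousMap.exists_restrict_eq hs ⟨_, hκ.domRestrict⟩
  exact ⟨Function.curry g, g.continuous, fun p hp => (DFunLike.congr_fun hg ⟨p, hp⟩).symm⟩

lemma tendstoUniformlyOn_inv_pow_smul_of_isLittleO {𝕜 E F : Type*} [NormedField 𝕜]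
    [SeminormedAddCommGroup E] [NormedSpace 𝕜 E] [SeminormedAddCommGroup F] [NormedSpace 𝕜 F]
    {f g : E → F} {n : ℕ} {s : Set E}
    (hg : ∀ (c : 𝕜) (x : E), g (c • x) = c ^ n • g x)
    (hfg : (fun x => f x - g x) =o[𝓝 0] fun x => ‖x‖ ^ n) (hs : Bornology.IsBounded s) :
    TendstoUniformlyOn (fun (c : 𝕜) x => (c ^ n)⁻¹ • f (c • x)) g (𝓝[≠] 0) s := by
  rw [Metric.tendstoUniformlyOn_iff]
  intro e he
  obtain ⟨C, hC, hsC⟩ := hs.exists_pos_norm_le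
  have hδ : 0 < e / (2 * C ^ n) := by positivity
  have hsmall : ∀ᶠ c : 𝕜 in 𝓝[≠] 0, ∀ x ∈ s,
      ‖f (c • x) - g (c • x)‖ ≤ e / (2 * C ^ n) * ‖‖c • x‖ ^ n‖ :=
    (NormedSpace.isVonNBounded_of_isBounded 𝕜 hs (hfg.bound hδ)).eventually_nhdsNE_zero
  filter_upwards [hsmall, self_mem_nhdsWithin] with c hc hc0 x hx
  have hcn : c ^ n ≠ 0 := pow_ne_zero n hc0
  have hcn' : ‖c‖ ^ n ≠ 0 := by rwa [← norm_pow, norm_ne_zero_iff]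
  calc dist (g x) ((c ^ n)⁻¹ • f (c • x))
      = ‖(c ^ n)⁻¹ • (f (c • x) - g (c • x))‖ := by
        rw [dist_comm, dist_eq_norm, smul_sub, hg, inv_smul_smul₀ hcn]
    _ = (‖c‖ ^ n)⁻¹ * ‖f (c • x) - g (c • x)‖ := by rw [norm_smul, norm_inv, norm_pow]
    _ ≤ (‖c‖ ^ n)⁻¹ * (e / (2 * C ^ n) * (‖c‖ * C) ^ n) := by
        gcongr
        refine (hc x hx).trans ?_
        rw [norm_pow, norm_norm, norm_smul]
        gcongr
        exact hsC x hx
    _ = e / 2 := by rw [mul_pow]; field_simp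
    _ < e := half_lt_self he

section LocalExpansion

variable {E : Type*} [NormedAddCommGroup E] [NormedSpace ℝ E] [CompleteSpace E]

lemma norm_integral_sub_smul_le {g : ℝ → E} {a b δ : ℝ} {c : E}
    (hg : IntervalIntegrable g volume a b) (hδ : ∀ u ∈ uIoc a b, ‖g u - c‖ ≤ δ) :
    ‖(∫ u in a..b, g u) - (b - a) • c‖ ≤ δ * |b - a| := by
  rw [← intervalIntegral.integral_const,
    ← intervalIntegral.integral_sub hg intervalIntegrable_const]
  exact intervalIntegral.norm_integral_le_of_norm_le_const hδ

lemma isLittleO_integral_integral_sub {K : ℝ → ℝ → E} (hK : Continuous (Function.uncurry K))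
    (a b : ℝ) :
    (fun h : ℝ × ℝ => (∫ u in a..a + h.1, ∫ v in b..b + h.2, K u v) - (h.1 * h.2) • K a b)
      =o[𝓝 0] fun h => h.1 * h.2 := by
  refine Asymptotics.isLittleO_iff.2 fun δ hδ => ?_
  obtain ⟨r, hr, hball⟩ := Metric.continuous_iff.1 hK (a, b) δ hδ
  filter_upwards [Metric.ball_mem_nhds 0 hr] with h hh
  obtain ⟨h₁, h₂⟩ : |h.1| < r ∧ |h.2| < r := by simpa [Prod.norm_def] using hh
  have hclose : ∀ u ∈ uIoc a (a + h.1), ∀ v ∈ uIoc b (b + h.2), ‖K u v - K a b‖ ≤ δ := by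
    intro u hu v hv
    have hua := abs_sub_left_of_mem_uIcc (uIoc_subset_uIcc hu)
    have hvb := abs_sub_left_of_mem_uIcc (uIoc_subset_uIcc hv)
    rw [add_sub_cancel_left] at hua hvb
    rw [← dist_eq_norm]
    exact (hball (u, v) (max_lt (hua.trans_lt h₁) (hvb.trans_lt h₂))).le
  have hinner : ∀ u ∈ uIoc a (a + h.1),
      ‖(∫ v in b..b + h.2, K u v) - h.2 • K a b‖ ≤ δ * |h.2| := fun u hu => by
    have hKu : Continuous (K u) := hK.comp (Continuous.prodMk_right u)
    simpa only [add_sub_cancel_left] using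
      norm_integral_sub_smul_le (hKu.intervalIntegrable _ _) (hclose u hu)
  have hint : Continuous fun u => ∫ v in b..b + h.2, K u v :=
    intervalIntegral.continuous_parametric_intervalIntegral_of_continuous' hK b (b + h.2)
  have houter := norm_integral_sub_smul_le (hint.intervalIntegrable _ _) hinner
  rwa [add_sub_cancel_left, smul_smul, mul_assoc, mul_comm |h.2|, ← abs_mul] at houter

end LocalExpansion

lemma intCov_congr {κ K : ℝ → ℝ → ℝ} {t s : ℝ}
    (h : ∀ u ∈ uIcc 0 t, ∀ v ∈ uIcc 0 s, κ u v = K u v) : intCov κ t s = intCov K t s :=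
  intervalIntegral.integral_congr fun u hu => intervalIntegral.integral_congr (h u hu)

lemma intCov_sub_left_eq_integral {K : ℝ → ℝ → ℝ} (hK : Continuous (Function.uncurry K))
    (a b s : ℝ) :
    intCov K b s - intCov K a s = ∫ u in a..b, ∫ v in (0:ℝ)..s, K u v := by
  have hint : Continuous fun u => ∫ v in (0:ℝ)..s, K u v :=
    intervalIntegral.continuous_parametric_intervalIntegral_of_continuous' hK 0 s
  exact intervalIntegral.integral_interval_sub_left
    (hint.intervalIntegrable _ _) (hint.intervalIntegrable _ _)

lemma intCov_rectangle_eq_integral {K : ℝ → ℝ → ℝ} (hK : Continuous (Function.uncurry K))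
    (a b c d : ℝ) :
    intCov K b d - intCov K b c - intCov K a d + intCov K a c =
      ∫ u in a..b, ∫ v in c..d, K u v := by
  have hint (s : ℝ) : Continuous fun u => ∫ v in (0:ℝ)..s, K u v :=
    intervalIntegral.continuous_parametric_intervalIntegral_of_continuous' hK 0 s
  calc intCov K b d - intCov K b c - intCov K a d + intCov K a c
      = (intCov K b d - intCov K a d) - (intCov K b c - intCov K a c) := by ring
    _ = ∫ u in a..b, ((∫ v in (0:ℝ)..d, K u v) - ∫ v in (0:ℝ)..c, K u v) := by
      rw [intCov_sub_left_eq_integral hK, intCov_sub_left_eq_integral hK,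
        intervalIntegral.integral_sub ((hint d).intervalIntegrable _ _)
          ((hint c).intervalIntegrable _ _)]
    _ = ∫ u in a..b, ∫ v in c..d, K u v := by
      refine intervalIntegral.integral_congr fun u _ => ?_
      have hKu : Continuous (K u) := hK.comp (Continuous.prodMk_right u)
      exact intervalIntegral.integral_interval_sub_left
        (hKu.intervalIntegrable _ _) (hKu.intervalIntegrable _ _)

lemma hasDerivAt_intCov_left {K : ℝ → ℝ → ℝ} (hK : Continuous (Function.uncurry K))
    (a s : ℝ) :
    HasDerivAt (fun t => intCov K t s) (∫ v in (0:ℝ)..s, K a v) a :=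
  have hint : Continuous fun u => ∫ v in (0:ℝ)..s, K u v :=
    intervalIntegral.continuous_parametric_intervalIntegral_of_continuous' hK 0 s
  (hint.integral_hasStrictDerivAt 0 a).hasDerivAt

lemma tendstoUniformlyOn_intCov_rectangle {K : ℝ → ℝ → ℝ}
    (hK : Continuous (Function.uncurry K)) (a b : ℝ) {S : Set (ℝ × ℝ)}
    (hS : Bornology.IsBounded S) :
    TendstoUniformlyOn
      (fun ε p => (intCov K (a + ε * p.1) (b + ε * p.2) - intCov K (a + ε * p.1) b -
        intCov K a (b + ε * p.2) + intCov K a b) / ε ^ 2)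
      (fun p => p.1 * p.2 * K a b) (𝓝[≠] 0) S := by
  have hquad : (fun h : ℝ × ℝ => h.1 * h.2) =O[𝓝 0] fun h => ‖h‖ ^ 2 := by
    simpa only [sq] using
      (Asymptotics.isBigO_fst_prod'.norm_right).mul (Asymptotics.isBigO_snd_prod'.norm_right)
  have hlim := tendstoUniformlyOn_inv_pow_smul_of_isLittleO (𝕜 := ℝ)
    (g := fun p : ℝ × ℝ => (p.1 * p.2) • K a b)
    (fun c p => by simp only [Prod.smul_fst, Prod.smul_snd, smul_eq_mul]; ring)
    ((isLittleO_integral_integral_sub hK a b).trans_isBigO hquad) hS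
  simpa only [← intCov_rectangle_eq_integral hK, Prod.smul_fst, Prod.smul_snd, smul_eq_mul,
    inv_mul_eq_div] using hlim

lemma tendstoUniformlyOn_intCov_left {K : ℝ → ℝ → ℝ}
    (hK : Continuous (Function.uncurry K)) (a s : ℝ) {S : Set ℝ} (hS : Bornology.IsBounded S) :
    TendstoUniformlyOn (fun ε t => (intCov K (a + ε * t) s - intCov K a s) / ε)
      (fun t => t * ∫ v in (0:ℝ)..s, K a v) (𝓝[≠] 0) S := by
  have hexp := (hasDerivAt_iff_isLittleO_nhds_zero.1 (hasDerivAt_intCov_left hK a s)).norm_right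
  have hlim := tendstoUniformlyOn_inv_pow_smul_of_isLittleO (𝕜 := ℝ) (n := 1)
    (g := fun t => t • ∫ v in (0:ℝ)..s, K a v)
    (fun c t => by simp only [smul_eq_mul, pow_one, mul_assoc])
    (by simpa only [pow_one] using hexp) hS
  simpa only [pow_one, smul_eq_mul, inv_mul_eq_div] using hlim

/-- Assumptions GD and A for integrated Gaussian processes, with `γ_ε = ε`:
(i) the rescaled second difference of `k` converges uniformly on `[0,1]²` to `ts·κ(T_n,T_n)`;
(ii) the rescaled increment converges uniformly on `[0,1]` to `t·∫_0^T κ(T_n,v) dv`. -/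
theorem integrated_assumptions
    (κ : ℝ → ℝ → ℝ) (Tn : ℝ)
    (hκ : ContinuousOn (fun p : ℝ × ℝ => κ p.1 p.2) (Ici 0 ×ˢ Ici 0))
    (hTn : 0 < Tn) :
    (TendstoUniformlyOn
      (fun ε (p : ℝ × ℝ) =>
        (intCov κ (Tn + ε * p.1) (Tn + ε * p.2) - intCov κ (Tn + ε * p.1) Tn -
          intCov κ Tn (Tn + ε * p.2) + intCov κ Tn Tn) / ε ^ 2)
      (fun p => p.1 * p.2 * κ Tn Tn) (𝓝[>] (0:ℝ)) (Icc 0 1 ×ˢ Icc 0 1)) ∧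
    (∀ T : ℝ, 0 < T → TendstoUniformlyOn
      (fun ε t => (intCov κ (Tn + ε * t) T - intCov κ Tn T) / ε)
      (fun t => t * ∫ v in (0:ℝ)..T, κ Tn v) (𝓝[>] (0:ℝ)) (Icc 0 1)) := by
  obtain ⟨K, hK, hEq⟩ := exists_continuous_uncurry_eqOn (isClosed_Ici.prod isClosed_Ici) hκ
  have hκK {u v : ℝ} (hu : 0 ≤ u) (hv : 0 ≤ v) : κ u v = K u v := hEq (mk_mem_prod hu hv)
  have hcov {t s : ℝ} (ht : 0 ≤ t) (hs : 0 ≤ s) : intCov κ t s = intCov K t s :=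
    intCov_congr fun u hu v hv => hκK (uIcc_of_le ht ▸ hu).1 (uIcc_of_le hs ▸ hv).1
  have hnonneg {ε t : ℝ} (hε : 0 < ε) (ht : t ∈ Icc 0 1) : 0 ≤ Tn + ε * t :=
    add_nonneg hTn.le (mul_nonneg hε.le ht.1)
  have hI : Bornology.IsBounded (Icc (0:ℝ) 1) := Metric.isBounded_Icc 0 1
  refine ⟨?_, fun T hT => ?_⟩
  · rw [hκK hTn.le hTn.le]
    refine (tendstoUniformlyOn_of_filter_le (tendstoUniformlyOn_intCov_rectangle hK Tn Tn
      (hI.prod hI)) (nhdsGT_le_nhdsNE 0)).congr ?_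
    filter_upwards [self_mem_nhdsWithin] with ε hε p hp
    simp only [hcov, hnonneg hε hp.1, hnonneg hε hp.2, hTn.le]
  · rw [intervalIntegral.integral_congr fun v hv => hκK hTn.le (uIcc_of_le hT.le ▸ hv).1]
    refine (tendstoUniformlyOn_of_filter_le (tendstoUniformlyOn_intCov_left hK Tn T hI)
      (nhdsGT_le_nhdsNE 0)).congr ?_
    filter_upwards [self_mem_nhdsWithin] with ε hε t ht
    simp only [hcov, hnonneg hε ht, hTn.le, hT.le]
end

section
/- Let κ : [0,∞)×[0,∞) → ℝ be continuous, k(t,s) = ∫_0^t ∫_0^s κ(u,v) du dv, fix T_n > 0 and α ∈ (0,1]. Suppose: (i) there is ĝ ∈ L¹([0,1]²) such that ‖κ(T_n+ε·, T_n+ε·) − κ(T_n,T_n) − ε^α ĝ‖_{L¹([0,1]²)} = o(ε^α) as ε → 0⁺; and (ii) for every T > 0 there is g̃(·;T) ∈ L¹([0,1]) such that ‖∫_0^T κ(T_n+ε·, v) dv − ∫_0^T κ(T_n,v) dv − ε^α g̃(·;T)‖_{L¹([0,1])} = o(ε^α) as ε → 0⁺. Then, with φ̄(t,s) = ∫_0^t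 ∫_0^s ĝ(u,v) du dv and ψ̄(t;T) = ∫_0^t g̃(u;T) du: (a) k(T_n+εt,T_n+εs) − k(T_n+εt,T_n) − k(T_n,T_n+εs) + k(T_n,T_n) = ε²[κ(T_n,T_n)·ts + φ̄(t,s)ε^α + R¹_ε(t,s)] with sup_{t,s∈[0,1]} |R¹_ε(t,s)|/ε^α → 0; and (b) for every T > 0, k(T_n+εt,T) − k(T_n,T) = ε[(∫_0^T κ(T_n,v)dv)·t + ψ̄(t;T)ε^α + R²_ε(t;T)] with sup_{t∈[0,1]} |R²_ε(t;T)|/ε^α → 0. That is, Assumption R1 holds with a² = κ(T_n,T_n) and c(T) = ∫_0^T κ(T_n,v)dv. -/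
/-!
The second difference of `k` at `x` is the integral of `κ` over the square with corners `(x, x)`
and `(x + εt, x + εs)`, and the first difference is the integral of `u ↦ ∫_0^T κ(u,v) dv` over
`[x, x + εt]`. Rescaling by `ε` turns both into integrals over subsets of a fixed unit box, and the
integral of the remainder over any such subset is at most its `L¹` norm on the whole box, which
gives the uniformity in `t` and `s`.
-/

open MeasureTheory Filter Topology Set

open Function (uncurry)
open scoped Interval

lemma tendstoUniformlyOn_zero_of_norm_le {ι β E : Type*} [SeminormedAddCommGroup E]
    {l : Filter ι} {F : ι → β → E} {s : Set β} {G : ι → ℝ} (hG : Tendsto G l (𝓝 0))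
    (hFG : ∀ᶠ i in l, ∀ x ∈ s, ‖F i x‖ ≤ G i) :
    TendstoUniformlyOn F (fun _ => 0) l s := by
  refine SeminormedAddGroup.tendstoUniformlyOn_zero.2 fun δ hδ => ?_
  filter_upwards [hFG, hG.eventually_lt_const hδ] with i hi hGi x hx
  exact (hi x hx).trans_lt hGi

lemma norm_setIntegral_le_setIntegral_norm_of_subset {β E : Type*} [MeasurableSpace β]
    [NormedAddCommGroup E] [NormedSpace ℝ E] {μ : Measure β} {f : β → E} {A S : Set β}
    (hf : IntegrableOn f S μ) (hAS : A ⊆ S) :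
    ‖∫ x in A, f x ∂μ‖ ≤ ∫ x in S, ‖f x‖ ∂μ :=
  (norm_integral_le_integral_norm f).trans
    (setIntegral_mono_set hf.norm (ae_of_all _ fun _ => norm_nonneg _) hAS.eventuallyLE)

lemma tendstoUniformlyOn_setIntegral_expansion {ι β X E : Type*} [MeasurableSpace β]
    [NormedAddCommGroup E] [NormedSpace ℝ E] [CompleteSpace E] {μ : Measure β} {l : Filter ι}
    {S : Set β} {f : ι → β → E} {c : E} {g : β → E} {r : ι → ℝ} {K : Set X} {A : X → Set β}
    (hS : μ S ≠ ⊤) (hf : ∀ᶠ i in l, IntegrableOn (f i) S μ) (hg : IntegrableOn g S μ)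
    (hr : ∀ᶠ i in l, 0 < r i)
    (hlim : Tendsto (fun i => (∫ p in S, ‖f i p - c - r i • g p‖ ∂μ) / r i) l (𝓝 0))
    (hA : ∀ x ∈ K, A x ⊆ S) :
    TendstoUniformlyOn
      (fun i x => (r i)⁻¹ •
        ((∫ p in A x, f i p ∂μ) - μ.real (A x) • c - r i • ∫ p in A x, g p ∂μ))
      (fun _ => 0) l K := by
  refine tendstoUniformlyOn_zero_of_norm_le hlim ?_
  filter_upwards [hf, hr] with i hfi hri x hx
  have hc : IntegrableOn (fun _ => c) S μ := integrableOn_const hS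
  have hfc : IntegrableOn (fun p => f i p - c) S μ := hfi.sub hc
  have hrg : IntegrableOn (fun p => r i • g p) S μ := hg.smul (r i)
  have hrem : IntegrableOn (fun p => f i p - c - r i • g p) S μ := hfc.sub hrg
  have hsplit : (∫ p in A x, f i p ∂μ) - μ.real (A x) • c - r i • ∫ p in A x, g p ∂μ =
      ∫ p in A x, (f i p - c - r i • g p) ∂μ := by
    rw [integral_sub (hfc.mono_set (hA x hx)) (hrg.mono_set (hA x hx)),
      integral_sub (hfi.mono_set (hA x hx)) (hc.mono_set (hA x hx)), setIntegral_const,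
      integral_smul]
  rw [hsplit, norm_smul, norm_inv, Real.norm_of_nonneg hri.le, inv_mul_eq_div]
  gcongr
  exact norm_setIntegral_le_setIntegral_norm_of_subset hrem (hA x hx)

lemma integrableOn_comp_add_smul {V E : Type*} [NormedAddCommGroup V] [NormedSpace ℝ V]
    [FiniteDimensional ℝ V] [MeasurableSpace V] [BorelSpace V] [NormedAddCommGroup E]
    {μ : Measure V} [μ.IsAddHaarMeasure] {f : V → E} {s t : Set V} {x : V} {r : ℝ}
    (hf : IntegrableOn f s μ) (hs : MeasurableSet s) (hr : r ≠ 0)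
    (ht : MapsTo (fun p => x + r • p) t s) : IntegrableOn (fun p => f (x + r • p)) t μ := by
  have hmeas : Measurable fun p => x + r • p := by fun_prop
  have hcomp : Integrable (fun p => s.indicator f (x + r • p)) μ :=
    (integrable_comp_smul_iff μ (fun q => s.indicator f (x + q)) hr).2
      ((hf.integrable_indicator hs).comp_add_left x)
  refine IntegrableOn.mono_set ?_ ht
  exact (integrable_indicator_iff (hmeas hs)).1 hcomp

lemma mapsTo_add_mul_Icc (x t : ℝ) {ε : ℝ} (hε : 0 ≤ ε) :
    MapsTo (fun u => x + ε * u) (Icc 0 t) (Icc x (x + ε * t)) := fun _ hu =>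
  ⟨le_add_of_nonneg_right (mul_nonneg hε hu.1),
    add_le_add_right (mul_le_mul_of_nonneg_left hu.2 hε) x⟩

section IteratedIntervalIntegral

variable {E : Type*} [NormedAddCommGroup E] {μ ν : Measure ℝ} [SFinite μ] [SFinite ν]
  {f : ℝ → ℝ → E} {a b c d : ℝ}

lemma ae_intervalIntegrable_of_integrableOn_prod
    (hf : IntegrableOn (uncurry f) (Ι a b ×ˢ Ι c d) (μ.prod ν)) :
    ∀ᵐ u ∂μ.restrict (Ι a b), IntervalIntegrable (f u) ν c d := by
  rw [IntegrableOn, ← Measure.prod_restrict] at hf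
  filter_upwards [hf.prod_right_ae] with u hu
  exact intervalIntegrable_iff.2 hu

variable [NormedSpace ℝ E]

lemma intervalIntegrable_intervalIntegral_of_integrableOn_prod
    (hf : IntegrableOn (uncurry f) (Ι a b ×ˢ Ι c d) (μ.prod ν)) :
    IntervalIntegrable (fun u => ∫ v in c..d, f u v ∂ν) μ a b := by
  rw [IntegrableOn, ← Measure.prod_restrict] at hf
  simp only [intervalIntegrable_iff, intervalIntegral.intervalIntegral_eq_integral_uIoc]
  exact hf.integral_prod_left.smul _

lemma setIntegral_Ioc_prod_Ioc {f : ℝ × ℝ → E} (hab : a ≤ b) (hcd : c ≤ d)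
    (hf : IntegrableOn f (Ioc a b ×ˢ Ioc c d) (μ.prod ν)) :
    ∫ p in Ioc a b ×ˢ Ioc c d, f p ∂(μ.prod ν) = ∫ u in a..b, ∫ v in c..d, f (u, v) ∂ν ∂μ := by
  simp only [intervalIntegral.integral_of_le hab, intervalIntegral.integral_of_le hcd]
  exact setIntegral_prod f hf

end IteratedIntervalIntegral

section Rescale

variable {E : Type*} [NormedAddCommGroup E] [NormedSpace ℝ E]

lemma intervalIntegral_add_mul (f : ℝ → E) (x ε t : ℝ) :
    ∫ u in x..x + ε * t, f u = ε • ∫ u in (0 : ℝ)..t, f (x + ε * u) := by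
  simp only [intervalIntegral.smul_integral_comp_add_mul, mul_zero, add_zero]

lemma intervalIntegral_intervalIntegral_add_mul (f : ℝ → ℝ → E) (x y ε t s : ℝ) :
    ∫ u in x..x + ε * t, ∫ v in y..y + ε * s, f u v =
      ε ^ 2 • ∫ u in (0 : ℝ)..t, ∫ v in (0 : ℝ)..s, f (x + ε * u) (y + ε * v) := by
  simp only [intervalIntegral_add_mul, intervalIntegral.integral_smul, smul_smul, sq]

end Rescale

section LocallyIntegrableOnQuadrant

variable {E : Type*} [NormedAddCommGroup E] {f : ℝ → ℝ → E}
  (hf : LocallyIntegrableOn (uncurry f) (Ici 0 ×ˢ Ici 0))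
include hf

lemma integrableOn_uIoc_prod_uIoc {a b c d : ℝ} (ha : 0 ≤ a) (hb : 0 ≤ b) (hc : 0 ≤ c)
    (hd : 0 ≤ d) : IntegrableOn (uncurry f) (Ι a b ×ˢ Ι c d) := by
  have hbox : [[a, b]] ×ˢ [[c, d]] ⊆ Ici (0 : ℝ) ×ˢ Ici (0 : ℝ) :=
    prod_mono (ordConnected_Ici.uIcc_subset ha hb) (ordConnected_Ici.uIcc_subset hc hd)
  exact (hf.integrableOn_compact_subset hbox (isCompact_uIcc.prod isCompact_uIcc)).mono_set
    (prod_mono uIoc_subset_uIcc uIoc_subset_uIcc)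

lemma integrableOn_comp_add_mul_prod {x y ε t s : ℝ} (hx : 0 ≤ x) (hy : 0 ≤ y) (hε : 0 < ε) :
    IntegrableOn (fun p : ℝ × ℝ => f (x + ε * p.1) (y + ε * p.2)) (Icc 0 t ×ˢ Icc 0 s) := by
  have hbox : Icc x (x + ε * t) ×ˢ Icc y (y + ε * s) ⊆ Ici 0 ×ˢ Ici 0 :=
    prod_mono (fun _ hu => hx.trans hu.1) fun _ hv => hy.trans hv.1
  exact integrableOn_comp_add_smul (V := ℝ × ℝ) (f := uncurry f) (x := (x, y))
    (hf.integrableOn_compact_subset hbox (isCompact_Icc.prod isCompact_Icc))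
    (measurableSet_Icc.prod measurableSet_Icc) hε.ne'
    ((mapsTo_add_mul_Icc x t hε.le).prodMap (mapsTo_add_mul_Icc y s hε.le))

variable [NormedSpace ℝ E]

lemma intervalIntegrable_intervalIntegral_right {a b c d : ℝ} (ha : 0 ≤ a) (hb : 0 ≤ b)
    (hc : 0 ≤ c) (hd : 0 ≤ d) :
    IntervalIntegrable (fun u => ∫ v in c..d, f u v) volume a b :=
  intervalIntegrable_intervalIntegral_of_integrableOn_prod
    (integrableOn_uIoc_prod_uIoc hf ha hb hc hd)

lemma integrableOn_intervalIntegral_comp_add_mul {x ε t c d : ℝ} (hx : 0 ≤ x) (hε : 0 < ε)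
    (ht : 0 ≤ t) (hc : 0 ≤ c) (hd : 0 ≤ d) :
    IntegrableOn (fun u => ∫ v in c..d, f (x + ε * u) v) (Icc 0 t) := by
  have hle : x ≤ x + ε * t := le_add_of_nonneg_right (by positivity)
  have hint := (intervalIntegrable_iff_integrableOn_Icc_of_le hle).1
    (intervalIntegrable_intervalIntegral_right hf hx (hx.trans hle) hc hd)
  exact integrableOn_comp_add_smul hint measurableSet_Icc hε.ne' (mapsTo_add_mul_Icc x t hε.le)

end LocallyIntegrableOnQuadrant

section IntCov

variable {κ : ℝ → ℝ → ℝ} (hκ : LocallyIntegrableOn (uncurry κ) (Ici 0 ×ˢ Ici 0))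
include hκ

lemma intCov_sub_left {a b T : ℝ} (ha : 0 ≤ a) (hb : 0 ≤ b) (hT : 0 ≤ T) :
    intCov κ b T - intCov κ a T = ∫ u in a..b, ∫ v in (0 : ℝ)..T, κ u v :=
  intervalIntegral.integral_interval_sub_left
    (intervalIntegrable_intervalIntegral_right hκ le_rfl hb le_rfl hT)
    (intervalIntegrable_intervalIntegral_right hκ le_rfl ha le_rfl hT)

lemma intCov_rectangle_increment {a b c d : ℝ} (ha : 0 ≤ a) (hb : 0 ≤ b) (hc : 0 ≤ c)
    (hd : 0 ≤ d) :
    intCov κ b d - intCov κ b c - intCov κ a d + intCov κ a c =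
      ∫ u in a..b, ∫ v in c..d, κ u v := by
  have hsection {T : ℝ} (hT : 0 ≤ T) :
      ∀ᵐ u ∂volume.restrict (Ι a b), IntervalIntegrable (κ u) volume 0 T :=
    ae_intervalIntegrable_of_integrableOn_prod (integrableOn_uIoc_prod_uIoc hκ ha hb le_rfl hT)
  calc intCov κ b d - intCov κ b c - intCov κ a d + intCov κ a c
      = (intCov κ b d - intCov κ a d) - (intCov κ b c - intCov κ a c) := by ring
    _ = ∫ u in a..b, ((∫ v in (0 : ℝ)..d, κ u v) - ∫ v in (0 : ℝ)..c, κ u v) := by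
      rw [intCov_sub_left hκ ha hb hd, intCov_sub_left hκ ha hb hc, intervalIntegral.integral_sub
        (intervalIntegrable_intervalIntegral_right hκ ha hb le_rfl hd)
        (intervalIntegrable_intervalIntegral_right hκ ha hb le_rfl hc)]
    _ = ∫ u in a..b, ∫ v in c..d, κ u v := by
      refine intervalIntegral.integral_congr_ae_restrict ?_
      filter_upwards [hsection hd, hsection hc] with u hud huc
      exact intervalIntegral.integral_interval_sub_left hud huc

end IntCov

theorem integrated_refined_expansion_R1_general
    {κ : ℝ → ℝ → ℝ} {x aSq : ℝ} {r c : ℝ → ℝ} {ghat : ℝ × ℝ → ℝ} {gtilde : ℝ → ℝ → ℝ}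
    (hκ : LocallyIntegrableOn (uncurry κ) (Ici 0 ×ˢ Ici 0)) (hx : 0 ≤ x)
    (hr : ∀ᶠ ε in 𝓝[>] (0 : ℝ), 0 < r ε)
    (hghat : IntegrableOn ghat (Icc 0 1 ×ˢ Icc 0 1))
    (hghat_lim : Tendsto
      (fun ε => (∫ p in Icc (0 : ℝ) 1 ×ˢ Icc (0 : ℝ) 1,
        |κ (x + ε * p.1) (x + ε * p.2) - aSq - r ε * ghat p|) / r ε)
      (𝓝[>] 0) (𝓝 0))
    (hgtilde : ∀ T : ℝ, 0 < T → IntegrableOn (fun u => gtilde u T) (Icc 0 1))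
    (hgtilde_lim : ∀ T : ℝ, 0 < T → Tendsto
      (fun ε => (∫ u in Icc (0 : ℝ) 1,
        |(∫ v in (0 : ℝ)..T, κ (x + ε * u) v) - c T - r ε * gtilde u T|) / r ε)
      (𝓝[>] 0) (𝓝 0)) :
    (TendstoUniformlyOn
      (fun ε (p : ℝ × ℝ) =>
        ((intCov κ (x + ε * p.1) (x + ε * p.2) - intCov κ (x + ε * p.1) x -
            intCov κ x (x + ε * p.2) + intCov κ x x) / ε ^ 2 -
          aSq * (p.1 * p.2) -
          (∫ u in (0 : ℝ)..p.1, ∫ v in (0 : ℝ)..p.2, ghat (u, v)) * r ε) / r ε)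
      (fun _ => 0) (𝓝[>] 0) (Icc 0 1 ×ˢ Icc 0 1)) ∧
    (∀ T : ℝ, 0 < T → TendstoUniformlyOn
      (fun ε t =>
        ((intCov κ (x + ε * t) T - intCov κ x T) / ε - c T * t -
          (∫ u in (0 : ℝ)..t, gtilde u T) * r ε) / r ε)
      (fun _ => 0) (𝓝[>] 0) (Icc 0 1)) := by
  have hnonneg {ε u : ℝ} (hε : 0 < ε) (hu : u ∈ Icc (0 : ℝ) 1) : 0 ≤ x + ε * u :=
    add_nonneg hx (mul_nonneg hε.le hu.1)
  have hIoc {u : ℝ} (hu : u ∈ Icc (0 : ℝ) 1) : Ioc 0 u ⊆ Icc 0 1 :=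
    Ioc_subset_Icc_self.trans (Icc_subset_Icc_right hu.2)
  refine ⟨?_, fun T hT => ?_⟩
  · have hint {ε : ℝ} (hε : 0 < ε) :
        IntegrableOn (fun p : ℝ × ℝ => κ (x + ε * p.1) (x + ε * p.2)) (Icc 0 1 ×ˢ Icc 0 1) :=
      integrableOn_comp_add_mul_prod hκ hx hx hε
    have hbox {p : ℝ × ℝ} (hp : p ∈ Icc (0 : ℝ) 1 ×ˢ Icc (0 : ℝ) 1) :
        Ioc 0 p.1 ×ˢ Ioc 0 p.2 ⊆ Icc 0 1 ×ˢ Icc 0 1 :=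
      prod_mono (hIoc hp.1) (hIoc hp.2)
    refine (tendstoUniformlyOn_setIntegral_expansion
      (isCompact_Icc.prod isCompact_Icc).measure_ne_top
      (eventually_mem_nhdsWithin.mono fun _ => hint) hghat hr hghat_lim
      (A := fun p : ℝ × ℝ => Ioc 0 p.1 ×ˢ Ioc 0 p.2)
      fun _ => hbox).congr ?_
    filter_upwards [self_mem_nhdsWithin] with ε (hε : 0 < ε) p hp
    simp only [intCov_rectangle_increment hκ hx (hnonneg hε hp.1) hx (hnonneg hε hp.2),
      intervalIntegral_intervalIntegral_add_mul, smul_eq_mul,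
      mul_div_cancel_left₀ _ (pow_ne_zero 2 hε.ne'),
      setIntegral_Ioc_prod_Ioc hp.1.1 hp.2.1 ((hint hε).mono_set (hbox hp)),
      setIntegral_Ioc_prod_Ioc hp.1.1 hp.2.1 (hghat.mono_set (hbox hp)),
      Measure.volume_eq_prod, measureReal_prod_prod, Real.volume_real_Ioc_of_le hp.1.1,
      Real.volume_real_Ioc_of_le hp.2.1, sub_zero]
    ring
  · refine (tendstoUniformlyOn_setIntegral_expansion isCompact_Icc.measure_ne_top
      (eventually_mem_nhdsWithin.mono fun _ hε =>
        integrableOn_intervalIntegral_comp_add_mul hκ hx hε zero_le_one le_rfl hT.le)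
      (hgtilde T hT) hr (hgtilde_lim T hT) (A := Ioc 0) fun _ => hIoc).congr ?_
    filter_upwards [self_mem_nhdsWithin] with ε (hε : 0 < ε) t ht
    simp only [intCov_sub_left hκ hx (hnonneg hε ht) hT.le, intervalIntegral_add_mul,
      mul_div_cancel_left₀ _ hε.ne', intervalIntegral.integral_of_le ht.1,
      Real.volume_real_Ioc_of_le ht.1, sub_zero, smul_eq_mul]
    ring

/-- Part 1 of Proposition 4.10: if `κ(T_n+εu,T_n+εv) = κ(T_n,T_n) + ε^α ĝ(u,v) + o_{L¹}(ε^α)`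
and `∫_0^T κ(T_n+εu,v)dv = ∫_0^T κ(T_n,v)dv + ε^α g̃(u;T) + o_{L¹}(ε^α)`, then
Assumption R1 holds for `k = intCov κ`, with `a² = κ(T_n,T_n)`, `c(T) = ∫_0^T κ(T_n,v)dv`,
`φ̄(t,s) = ∫_0^t∫_0^s ĝ` and `ψ̄(t;T) = ∫_0^t g̃(u;T)du`; the remainders, divided by `ε^α`,
tend to `0` uniformly. -/
theorem integrated_refined_expansion_R1
    (κ : ℝ → ℝ → ℝ) (Tn α : ℝ) (ghat : ℝ × ℝ → ℝ) (gtilde : ℝ → ℝ → ℝ)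
    (hκ : ContinuousOn (fun p : ℝ × ℝ => κ p.1 p.2) (Ici 0 ×ˢ Ici 0))
    (hTn : 0 < Tn) (hα : α ∈ Ioc (0:ℝ) 1)
    (hghat : IntegrableOn ghat (Icc 0 1 ×ˢ Icc 0 1) volume)
    (hghat_lim : Tendsto
      (fun ε => (∫ p in (Icc (0:ℝ) 1 ×ˢ Icc (0:ℝ) 1),
        |κ (Tn + ε * p.1) (Tn + ε * p.2) - κ Tn Tn - ε ^ α * ghat p|) / ε ^ α)
      (𝓝[>] (0:ℝ)) (𝓝 0))
    (hgtilde : ∀ T : ℝ, 0 < T → IntegrableOn (fun u => gtilde u T) (Icc 0 1) volume)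
    (hgtilde_lim : ∀ T : ℝ, 0 < T → Tendsto
      (fun ε => (∫ u in Icc (0:ℝ) 1,
        |(∫ v in (0:ℝ)..T, κ (Tn + ε * u) v) - (∫ v in (0:ℝ)..T, κ Tn v) -
          ε ^ α * gtilde u T|) / ε ^ α)
      (𝓝[>] (0:ℝ)) (𝓝 0)) :
    (TendstoUniformlyOn
      (fun ε (p : ℝ × ℝ) =>
        ((intCov κ (Tn + ε * p.1) (Tn + ε * p.2) - intCov κ (Tn + ε * p.1) Tn -
            intCov κ Tn (Tn + ε * p.2) + intCov κ Tn Tn) / ε ^ 2 -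
          κ Tn Tn * (p.1 * p.2) -
          (∫ u in (0:ℝ)..p.1, ∫ v in (0:ℝ)..p.2, ghat (u, v)) * ε ^ α) / ε ^ α)
      (fun _ => 0) (𝓝[>] (0:ℝ)) (Icc 0 1 ×ˢ Icc 0 1)) ∧
    (∀ T : ℝ, 0 < T → TendstoUniformlyOn
      (fun ε t =>
        ((intCov κ (Tn + ε * t) T - intCov κ Tn T) / ε -
          (∫ v in (0:ℝ)..T, κ Tn v) * t -
          (∫ u in (0:ℝ)..t, gtilde u T) * ε ^ α) / ε ^ α)
      (fun _ => 0) (𝓝[>] (0:ℝ)) (Icc 0 1)) :=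
  integrated_refined_expansion_R1_general
    (hκ.locallyIntegrableOn (measurableSet_Ici.prod measurableSet_Ici)) hTn.le
    (eventually_mem_nhdsWithin.mono fun _ hε => Real.rpow_pos_of_pos hε α)
    hghat hghat_lim hgtilde hgtilde_lim
end
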